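/- Assume 0 ≤ α < N, p, q > 0, s > 1, ρ > 0, and that the Dirichlet eigenpair hypothesis holds for (Ω, λ₁, φ). If μ > C_{H,Ω} = λ₁ + ((N−2)/2)², then the system (S): −Δu − μ|x|^{−2}u ≥ (|x|^{−α} * v^p) v^q, −Δv − μ|x|^{−2}v ≥ u^s has no positive solution in C_Ω^ρ. -/

import Mathlib

open MeasureTheory Real Set
open scoped ENNReal NNReal

noncomputable section

/-- Euclidean space `ℝ^N`. -/
abbrev Euc (N : ℕ) := EuclideanSpace ℝ (Fin N)

/-- The Euclidean Laplacian `Δu(x) = ∑ ∂²u/∂xᵢ²(x)`, the trace of the Hessian. -/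
def lap (N : ℕ) (u : Euc N → ℝ) (x : Euc N) : ℝ :=
  ∑ i : Fin N,
    iteratedFDeriv ℝ 2 u x ![EuclideanSpace.single i 1, EuclideanSpace.single i 1]

/-- The open cone `C_Ω^ρ = {x : |x| > ρ, x/|x| ∈ Ω}`. -/
def coneGT (N : ℕ) (ρ : ℝ) (Ω : Set (Euc N)) : Set (Euc N) :=
  {x | ρ < ‖x‖ ∧ ‖x‖⁻¹ • x ∈ Ω}

/-- The full open cone `C_Ω = {x ≠ 0 : x/|x| ∈ Ω}`. -/
def cone (N : ℕ) (Ω : Set (Euc N)) : Set (Euc N) :=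
  {x | x ≠ 0 ∧ ‖x‖⁻¹ • x ∈ Ω}

/-- `Ω` is a nonempty, connected, relatively open subset of the unit sphere `S^{N-1}`. -/
def IsConeDomain (N : ℕ) (Ω : Set (Euc N)) : Prop :=
  Ω ⊆ Metric.sphere (0 : Euc N) 1 ∧ IsConnected Ω ∧
    IsOpen {ω : Metric.sphere (0 : Euc N) 1 | (ω : Euc N) ∈ Ω}

/-- The convolution `(|x|^{-α} * f)(x) = ∫_{C_Ω^ρ} f(y)|x-y|^{-α} dy`, valued in `[0,∞]`. -/
def rieszConv (N : ℕ) (α ρ : ℝ) (Ω : Set (Euc N)) (f : Euc N → ℝ) (x : Euc N) : ℝ≥0∞ :=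
  ∫⁻ y in coneGT N ρ Ω, ENNReal.ofReal (f y * ‖x - y‖ ^ (-α))

/-- Dirichlet eigenpair hypothesis for `(Ω, λ₁, φ)`: `φ` is continuous on the closure of `Ω`,
positive on `Ω`, vanishing on the relative boundary, with maximum `1`, and its 0-homogeneous
extension `Φ(x) = φ(x/|x|)` is `C²` on the open cone and satisfies `ΔΦ = -λ₁|x|⁻²Φ`. -/
structure DirichletEigenpair (N : ℕ) (Ω : Set (Euc N)) (lam1 : ℝ) (φ : Euc N → ℝ) : Prop where
  contOn : ContinuousOn φ (closure Ω)
  pos : ∀ ω ∈ Ω, 0 < φ ω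
  bdryZero : ∀ ω ∈ closure Ω \ Ω, φ ω = 0
  le_one : ∀ ω ∈ closure Ω, φ ω ≤ 1
  max_one : ∃ ω ∈ closure Ω, φ ω = 1
  smoothExt : ContDiffOn ℝ 2 (fun x => φ (‖x‖⁻¹ • x)) (cone N Ω)
  eigen : ∀ x ∈ cone N Ω,
    lap N (fun y => φ (‖y‖⁻¹ • y)) x = -lam1 * ‖x‖ ^ (-(2:ℝ)) * φ (‖x‖⁻¹ • x)

/-- The Hardy constant `C_{H,Ω} = λ₁ + ((N-2)/2)²`. -/
def CHconst (N : ℕ) (lam1 : ℝ) : ℝ := lam1 + (((N : ℝ) - 2) / 2) ^ 2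

/-- The smaller root `γ_*` of `γ(γ + N - 2) = λ₁ - μ`. -/
def gammaStar (N : ℕ) (lam1 μ : ℝ) : ℝ :=
  (-((N : ℝ) - 2) - Real.sqrt (((N : ℝ) - 2) ^ 2 + 4 * (lam1 - μ))) / 2

/-- A positive (classical) solution of `(E) : -Δu - μ|x|⁻²u ≥ (|x|^{-α} * uᵖ) u^q` in `C_Ω^ρ`. -/
def IsPosSolE (N : ℕ) (ρ μ α p q : ℝ) (Ω : Set (Euc N)) (u : Euc N → ℝ) : Prop :=
  ContDiffOn ℝ 2 u (coneGT N ρ Ω) ∧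
  ContinuousOn u (closure (coneGT N ρ Ω)) ∧
  (∀ x ∈ coneGT N ρ Ω, 0 < u x) ∧
  (∀ x ∈ coneGT N ρ Ω, rieszConv N α ρ Ω (fun y => u y ^ p) x < ⊤) ∧
  (∀ x ∈ coneGT N ρ Ω,
    (rieszConv N α ρ Ω (fun y => u y ^ p) x).toReal * u x ^ q ≤
      -lap N u x - μ * ‖x‖ ^ (-(2:ℝ)) * u x)

/-- A positive solution of `(Z) : -Δu - μ|x|⁻²u ≥ (∫_{C_Ω^ρ} uᵖ) u^q` in `C_Ω^ρ`. -/
def IsPosSolZ (N : ℕ) (ρ μ p q : ℝ) (Ω : Set (Euc N)) (u : Euc N → ℝ) : Prop :=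
  ContDiffOn ℝ 2 u (coneGT N ρ Ω) ∧
  ContinuousOn u (closure (coneGT N ρ Ω)) ∧
  (∀ x ∈ coneGT N ρ Ω, 0 < u x) ∧
  (∫⁻ y in coneGT N ρ Ω, ENNReal.ofReal (u y ^ p)) < ⊤ ∧
  (∀ x ∈ coneGT N ρ Ω,
    (∫⁻ y in coneGT N ρ Ω, ENNReal.ofReal (u y ^ p)).toReal * u x ^ q ≤
      -lap N u x - μ * ‖x‖ ^ (-(2:ℝ)) * u x)

/-- A positive solution `(u, v)` of the system `(S)` in `C_Ω^ρ`. -/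
def IsPosSolS (N : ℕ) (ρ μ α p q s : ℝ) (Ω : Set (Euc N)) (u v : Euc N → ℝ) : Prop :=
  ContDiffOn ℝ 2 u (coneGT N ρ Ω) ∧ ContinuousOn u (closure (coneGT N ρ Ω)) ∧
  ContDiffOn ℝ 2 v (coneGT N ρ Ω) ∧ ContinuousOn v (closure (coneGT N ρ Ω)) ∧
  (∀ x ∈ coneGT N ρ Ω, 0 < u x) ∧ (∀ x ∈ coneGT N ρ Ω, 0 < v x) ∧
  (∀ x ∈ coneGT N ρ Ω, rieszConv N α ρ Ω (fun y => v y ^ p) x < ⊤) ∧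
  (∀ x ∈ coneGT N ρ Ω,
    (rieszConv N α ρ Ω (fun y => v y ^ p) x).toReal * v x ^ q ≤
      -lap N u x - μ * ‖x‖ ^ (-(2:ℝ)) * u x) ∧
  (∀ x ∈ coneGT N ρ Ω, u x ^ s ≤ -lap N v x - μ * ‖x‖ ^ (-(2:ℝ)) * v x)


/-- Partial derivative in direction `e_i`. -/
def pd {N : ℕ} (i : Fin N) (f : Euc N → ℝ) (x : Euc N) : ℝ :=
  fderiv ℝ f x (EuclideanSpace.single i 1)

lemma pd_hasDerivAt {N : ℕ} {i : Fin N} {f : Euc N → ℝ} {x : Euc N}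
    (h : DifferentiableAt ℝ f x) :
    HasDerivAt (fun t : ℝ => f (x + t • EuclideanSpace.single i 1)) (pd i f x) 0 :=
  h.hasFDerivAt.hasLineDerivAt _

lemma pd_eq_of {N : ℕ} {i : Fin N} {f : Euc N → ℝ} {x : Euc N} {c : ℝ}
    (h : DifferentiableAt ℝ f x)
    (h' : HasDerivAt (fun t : ℝ => f (x + t • EuclideanSpace.single i 1)) c 0) :
    pd i f x = c := (pd_hasDerivAt h).unique h'

lemma pd_congr {N : ℕ} {i : Fin N} {f g : Euc N → ℝ} {x : Euc N}
    (h : f =ᶠ[nhds x] g) : pd i f x = pd i g x := by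
  unfold pd; rw [h.fderiv_eq]

lemma pd_contDiffAt {N : ℕ} {i : Fin N} {f : Euc N → ℝ} {x : Euc N}
    (h : ContDiffAt ℝ 2 f x) : ContDiffAt ℝ 1 (pd i f) x := by
  have h1 : ContDiffAt ℝ 1 (fderiv ℝ f) x := h.fderiv_right (by norm_num)
  exact h1.clm_apply contDiffAt_const

lemma lap_eq {N : ℕ} {f : Euc N → ℝ} {x : Euc N}
    (h : ContDiffAt ℝ 2 f x) : lap N f x = ∑ i, pd i (pd i f) x := by
  have h1 : ContDiffAt ℝ 1 (fderiv ℝ f) x := h.fderiv_right (by norm_num)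
  have h2 := h1.differentiableAt (by norm_num)
  unfold lap
  refine Finset.sum_congr rfl fun i _ => ?_
  rw [iteratedFDeriv_two_apply]
  unfold pd
  rw [fderiv_clm_apply h2 (differentiableAt_const _)]
  simp

lemma pd_mul {N : ℕ} {i : Fin N} {f g : Euc N → ℝ} {x : Euc N}
    (hf : DifferentiableAt ℝ f x) (hg : DifferentiableAt ℝ g x) :
    pd i (fun y => f y * g y) x = pd i f x * g x + f x * pd i g x := by
  apply pd_eq_of (hf.mul hg)
  have := (pd_hasDerivAt (i := i) hf).mul (pd_hasDerivAt (i := i) hg)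
  rw [zero_smul, add_zero] at this
  exact this

lemma pd_comp {N : ℕ} {i : Fin N} {h : ℝ → ℝ} {f : Euc N → ℝ} {x : Euc N} {h' : ℝ}
    (hf : DifferentiableAt ℝ f x) (hh : HasDerivAt h h' (f x)) :
    pd i (fun y => h (f y)) x = h' * pd i f x := by
  unfold pd
  have := (hh.comp_hasFDerivAt x hf.hasFDerivAt).fderiv
  rw [show (fun y => h (f y)) = h ∘ f from rfl, this]
  simp

lemma ev_diff {N : ℕ} {f : Euc N → ℝ} {x : Euc N} (h : ContDiffAt ℝ 2 f x) :
    ∀ᶠ y in nhds x, DifferentiableAt ℝ f y := by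
  filter_upwards [h.eventually (by simp)] with y hy
  exact hy.differentiableAt (by norm_num)

lemma lap_mul {N : ℕ} {f g : Euc N → ℝ} {x : Euc N}
    (hf : ContDiffAt ℝ 2 f x) (hg : ContDiffAt ℝ 2 g x) :
    lap N (fun y => f y * g y) x =
      lap N f x * g x + 2 * ∑ i, pd i f x * pd i g x + f x * lap N g x := by
  rw [lap_eq hf, lap_eq hg, lap_eq (hf.mul hg), Finset.sum_mul, Finset.mul_sum, Finset.mul_sum,
    ← Finset.sum_add_distrib, ← Finset.sum_add_distrib]
  refine Finset.sum_congr rfl fun i _ => ?_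
  have e : pd i (fun y => f y * g y) =ᶠ[nhds x] fun y => pd i f y * g y + f y * pd i g y := by
    filter_upwards [ev_diff hf, ev_diff hg] with y h1 h2 using pd_mul h1 h2
  rw [pd_congr e]
  have hf0 := hf.differentiableAt (by norm_num)
  have hg0 := hg.differentiableAt (by norm_num)
  have hf1 := (pd_contDiffAt (i := i) hf).differentiableAt (by norm_num)
  have hg1 := (pd_contDiffAt (i := i) hg).differentiableAt (by norm_num)
  apply pd_eq_of ((hf1.mul hg0).add (hf0.mul hg1))
  have := ((pd_hasDerivAt (i := i) hf1).mul (pd_hasDerivAt (i := i) hg0)).add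
    ((pd_hasDerivAt (i := i) hf0).mul (pd_hasDerivAt (i := i) hg1))
  rw [zero_smul, add_zero] at this
  exact this.congr_deriv (by ring)

lemma lap_comp {N : ℕ} {h h1 : ℝ → ℝ} {h2 : ℝ} {f : Euc N → ℝ} {x : Euc N}
    (hf : ContDiffAt ℝ 2 f x) (hc : ContDiffAt ℝ 2 h (f x))
    (hh : ∀ᶠ t in nhds (f x), HasDerivAt h (h1 t) t) (hh1 : HasDerivAt h1 h2 (f x)) :
    lap N (fun y => h (f y)) x = h2 * ∑ i, pd i f x ^ 2 + h1 (f x) * lap N f x := by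
  have hcf : ContDiffAt ℝ 2 (fun y => h (f y)) x := hc.comp x hf
  rw [lap_eq hf, lap_eq hcf, Finset.mul_sum, Finset.mul_sum, ← Finset.sum_add_distrib]
  refine Finset.sum_congr rfl fun i _ => ?_
  have e : pd i (fun y => h (f y)) =ᶠ[nhds x] fun y => h1 (f y) * pd i f y := by
    filter_upwards [ev_diff hf, hf.continuousAt.eventually hh] with y a b using pd_comp a b
  have hf0 := hf.differentiableAt (by norm_num)
  have hf1 := (pd_contDiffAt (i := i) hf).differentiableAt (by norm_num)
  have hk : DifferentiableAt ℝ (fun y => h1 (f y)) x :=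
    (hh1.comp_hasFDerivAt x hf0.hasFDerivAt).differentiableAt
  rw [pd_congr e, pd_mul hk hf1, pd_comp hf0 hh1]
  ring

/-- Cubic positive part. -/
def P3 (y : ℝ) : ℝ := max 0 y ^ 3

lemma P3_hasDerivAt (y : ℝ) : HasDerivAt P3 (3 * max 0 y ^ 2) y := by
  rcases lt_trichotomy y 0 with h | h | h
  · have : P3 =ᶠ[nhds y] fun _ => 0 := by
      filter_upwards [Iio_mem_nhds h] with z hz
      simp [P3, max_eq_left (le_of_lt (mem_Iio.1 hz))]
    rw [max_eq_left h.le]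
    simpa using (hasDerivAt_const y (0:ℝ)).congr_of_eventuallyEq this
  · subst h
    rw [hasDerivAt_iff_isLittleO]
    simp only [P3, max_self, sub_zero]
    have : (fun x : ℝ => x ^ 3) =o[nhds 0] fun x => x := by
      simpa using Asymptotics.isLittleO_pow_id (𝕜 := ℝ) (n := 3) (by norm_num)
    refine Asymptotics.IsBigO.trans_isLittleO ?_ this
    apply Asymptotics.isBigO_of_le
    intro z
    rcases le_total z 0 with hz | hz <;> simp [hz]
  · have : P3 =ᶠ[nhds y] fun z => z ^ 3 := by
      filter_upwards [Ioi_mem_nhds h] with z hz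
      simp [P3, max_eq_right (le_of_lt (mem_Ioi.1 hz))]
    rw [max_eq_right h.le]
    simpa using (hasDerivAt_pow 3 y).congr_of_eventuallyEq this

lemma P2_hasDerivAt (y : ℝ) : HasDerivAt (fun z : ℝ => 3 * max 0 z ^ 2) (6 * max 0 y) y := by
  rcases lt_trichotomy y 0 with h | h | h
  · have : (fun z : ℝ => 3 * max 0 z ^ 2) =ᶠ[nhds y] fun _ => 0 := by
      filter_upwards [Iio_mem_nhds h] with z hz
      simp [max_eq_left (le_of_lt (mem_Iio.1 hz))]
    rw [max_eq_left h.le]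
    simpa using (hasDerivAt_const y (0:ℝ)).congr_of_eventuallyEq this
  · subst h
    rw [hasDerivAt_iff_isLittleO]
    simp only [max_self, sub_zero]
    have : (fun x : ℝ => 3 * x ^ 2) =o[nhds 0] fun x => x :=
      (Asymptotics.isLittleO_pow_id (𝕜 := ℝ) (n := 2) (by norm_num)).const_mul_left 3
    refine Asymptotics.IsBigO.trans_isLittleO ?_ this
    apply Asymptotics.isBigO_of_le
    intro z
    rcases le_total z 0 with hz | hz <;> simp [hz, sq_nonneg]
  · have : (fun z : ℝ => 3 * max 0 z ^ 2) =ᶠ[nhds y] fun z => 3 * z ^ 2 := by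
      filter_upwards [Ioi_mem_nhds h] with z hz
      simp [max_eq_right (le_of_lt (mem_Ioi.1 hz))]
    rw [max_eq_right h.le]
    refine HasDerivAt.congr_of_eventuallyEq ?_ this
    exact ((hasDerivAt_pow 2 y).const_mul 3).congr_deriv (by push_cast; ring)

lemma P3_contDiff : ContDiff ℝ 2 P3 := by
  have e1 : deriv P3 = fun z : ℝ => 3 * max 0 z ^ 2 := funext fun y => (P3_hasDerivAt y).deriv
  have e2 : deriv (fun z : ℝ => 3 * max 0 z ^ 2) = fun z : ℝ => 6 * max 0 z :=
    funext fun y => (P2_hasDerivAt y).deriv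
  rw [show (2 : WithTop ℕ∞) = 1 + 1 by norm_num, contDiff_succ_iff_deriv]
  refine ⟨fun y => (P3_hasDerivAt y).differentiableAt, by simp, ?_⟩
  rw [e1, contDiff_one_iff_deriv]
  refine ⟨fun y => (P2_hasDerivAt y).differentiableAt, ?_⟩
  rw [e2]
  fun_prop

/-- Divergence theorem, one component. -/
lemma div_comp {N : ℕ} (i : Fin N) {U K : Set (Euc N)} (hU : IsOpen U) (hK : IsCompact K)
    (hKU : K ⊆ U) {X : Euc N → ℝ} (hX : ContDiffOn ℝ 1 X U) (h0 : ∀ x ∈ U, x ∉ K → X x = 0) :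
    IntegrableOn (pd i X) U ∧ ∫ x in U, pd i X x = 0 := by
  set Y := U.indicator X with hY
  have hYz : ∀ x, x ∉ K → Y x = 0 := by
    intro x hx
    by_cases hxU : x ∈ U
    · rw [hY, indicator_of_mem hxU]; exact h0 x hxU hx
    · rw [hY, indicator_of_notMem hxU]
  have hev0 : ∀ x, x ∉ K → Y =ᶠ[nhds x] fun _ => 0 := by
    intro x hx
    filter_upwards [hK.isClosed.isOpen_compl.mem_nhds hx] with y hy using hYz y hy
  have hevX : ∀ x ∈ U, Y =ᶠ[nhds x] X := by
    intro x hx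
    filter_upwards [hU.mem_nhds hx] with y hy
    rw [hY, indicator_of_mem hy]
  have hYc : ContDiff ℝ 1 Y := by
    rw [contDiff_iff_contDiffAt]
    intro x
    by_cases hx : x ∈ U
    · exact (hX.contDiffAt (hU.mem_nhds hx)).congr_of_eventuallyEq (hevX x hx)
    · exact contDiffAt_const.congr_of_eventuallyEq (hev0 x fun h => hx (hKU h))
  have hcs : HasCompactSupport Y := HasCompactSupport.intro hK hYz
  have e : pd i Y = U.indicator (pd i X) := by
    funext x
    by_cases hx : x ∈ U
    · rw [indicator_of_mem hx]; exact pd_congr (hevX x hx)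
    · rw [indicator_of_notMem hx, pd_congr (hev0 x fun h => hx (hKU h))]
      simp [pd]
  have hc : Continuous (pd i Y) :=
    (hYc.continuous_fderiv (by norm_num)).clm_apply continuous_const
  have hcs' : HasCompactSupport (pd i Y) := by
    have := hcs.fderiv_apply (𝕜 := ℝ) (EuclideanSpace.single i 1)
    exact this
  have hYint : Integrable (pd i Y) := hc.integrable_of_hasCompactSupport hcs'
  constructor
  · rw [← integrable_indicator_iff hU.measurableSet, ← e]; exact hYint
  · rw [← integral_indicator hU.measurableSet, ← e]
    have := integral_mul_fderiv_eq_neg_fderiv_mul_of_integrable (μ := (volume : Measure (Euc N)))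
      (f := fun _ => (1:ℝ)) (g := Y) (v := EuclideanSpace.single i 1)
      (by simp) (by simpa [pd] using (show Integrable (fun x => fderiv ℝ Y x (EuclideanSpace.single i 1)) (volume : Measure (Euc N)) from hYint))
      (by simpa using hYc.continuous.integrable_of_hasCompactSupport hcs)
      (fun x _ => by fun_prop) (fun x _ => hYc.differentiable (by norm_num) x)
    simpa [pd] using this

lemma barta {N : ℕ} {U K : Set (Euc N)} (hU : IsOpen U) (hK : IsCompact K)
    (hKU : K ⊆ U) {w v H : Euc N → ℝ} (hw : ContDiffOn ℝ 2 w U) (hv : ContDiffOn ℝ 2 v U)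
    (hpos : ∀ x ∈ U, 0 < v x) (h0 : ∀ x ∈ U, x ∉ K → w x = 0)
    (hH : IntegrableOn H U)
    (hle : ∀ x ∈ U, w x ^ 2 / v x * lap N v x - w x * lap N w x ≤ H x) :
    0 ≤ ∫ x in U, H x := by
  have hwA : ∀ x ∈ U, ContDiffAt ℝ 2 w x := fun x hx => hw.contDiffAt (hU.mem_nhds hx)
  have hvA : ∀ x ∈ U, ContDiffAt ℝ 2 v x := fun x hx => hv.contDiffAt (hU.mem_nhds hx)
  let X : Fin N → Euc N → ℝ := fun i x => w x * w x / v x * pd i v x - w x * pd i w x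
  have hX : ∀ i, ContDiffOn ℝ 1 (X i) U := by
    intro i x hx
    have a1 := (hwA x hx).of_le (m := 1) (by norm_num)
    have a2 := (hvA x hx).of_le (m := 1) (by norm_num)
    have a3 := pd_contDiffAt (i := i) (hwA x hx)
    have a4 := pd_contDiffAt (i := i) (hvA x hx)
    exact ((((a1.mul a1).div a2 (hpos x hx).ne').mul a4).sub (a1.mul a3)).contDiffWithinAt
  have hX0 : ∀ i, ∀ x ∈ U, x ∉ K → X i x = 0 := by
    intro i x hx hxK
    simp [X, h0 x hx hxK]
  have key := fun i => div_comp i hU hK hKU (hX i) (hX0 i)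
  have hsum : ∫ x in U, ∑ i, pd i (X i) x = 0 := by
    rw [integral_finsetSum _ fun i _ => (key i).1]
    exact Finset.sum_eq_zero fun i _ => (key i).2
  rw [← hsum]
  refine setIntegral_mono_on (integrable_finsetSum _ fun i _ => (key i).1) hH hU.measurableSet ?_
  intro x hx
  refine le_trans ?_ (hle x hx)
  rw [lap_eq (hwA x hx), lap_eq (hvA x hx), Finset.mul_sum, Finset.mul_sum,
    ← Finset.sum_sub_distrib]
  refine Finset.sum_le_sum fun i _ => ?_
  have a1 := (hwA x hx).differentiableAt (by norm_num)
  have a2 := (hvA x hx).differentiableAt (by norm_num)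
  have a3 := (pd_contDiffAt (i := i) (hwA x hx)).differentiableAt (by norm_num)
  have a4 := (pd_contDiffAt (i := i) (hvA x hx)).differentiableAt (by norm_num)
  have hv0 := hpos x hx
  have hd : DifferentiableAt ℝ (X i) x :=
    ((hX i).contDiffAt (hU.mem_nhds hx)).differentiableAt (by norm_num)
  have b1 := pd_hasDerivAt (i := i) a1
  have b2 := pd_hasDerivAt (i := i) a2
  have b3 := pd_hasDerivAt (i := i) a3
  have b4 := pd_hasDerivAt (i := i) a4
  have hne : v (x + (0:ℝ) • EuclideanSpace.single i 1) ≠ 0 := by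
    rw [zero_smul, add_zero]; exact hv0.ne'
  have hh := (((b1.mul b1).div b2 hne).mul b4).sub (b1.mul b3)
  have e := pd_eq_of hd hh
  simp only [Pi.mul_apply, Pi.div_apply, zero_smul, add_zero] at e
  rw [e]
  have : w x ^ 2 / v x * pd i (pd i v) x - w x * pd i (pd i w) x -
      (pd i w x - w x / v x * pd i v x) ^ 2 =
      ((pd i w x * w x + w x * pd i w x) * v x - w x * w x * pd i v x) / v x ^ 2 * pd i v x +
      w x * w x / v x * pd i (pd i v) x - (pd i w x * pd i w x + w x * pd i (pd i w) x) := by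
    field_simp
    ring
  rw [← this]
  nlinarith [sq_nonneg (pd i w x - w x / v x * pd i v x)]

/-- shifted logarithmic radius. -/
def tau {N : ℕ} (T : ℝ) (x : Euc N) : ℝ := 1 / 2 * Real.log (‖x‖ ^ 2) - T

lemma nsq_contDiff {N : ℕ} : ContDiff ℝ 2 (fun x : Euc N => ‖x‖ ^ 2) := contDiff_norm_sq ℝ

lemma pd_nsq {N : ℕ} (i : Fin N) (x : Euc N) : pd i (fun x : Euc N => ‖x‖ ^ 2) x = 2 * x i := by
  unfold pd
  rw [fderiv_norm_sq_apply]
  simp [EuclideanSpace.inner_single_right]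

lemma lap_nsq {N : ℕ} (x : Euc N) : lap N (fun x : Euc N => ‖x‖ ^ 2) x = 2 * N := by
  rw [lap_eq nsq_contDiff.contDiffAt]
  have : ∀ i : Fin N, pd i (pd i (fun x : Euc N => ‖x‖ ^ 2)) x = 2 := by
    intro i
    rw [show pd i (fun x : Euc N => ‖x‖ ^ 2) = fun x => 2 * x i from funext (pd_nsq i)]
    apply pd_eq_of
    · fun_prop
    · simp only [PiLp.add_apply, PiLp.smul_apply, PiLp.single_apply, if_true,
        smul_eq_mul, mul_one]
      exact (((hasDerivAt_id (0:ℝ)).const_add (x i)).const_mul 2).congr_deriv (by ring)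
  simp [this]; ring

lemma tau_contDiffAt {N : ℕ} (T : ℝ) {x : Euc N} (hx : x ≠ 0) :
    ContDiffAt ℝ 2 (tau T) x := by
  have : ‖x‖ ^ 2 ≠ 0 := by positivity
  exact ((contDiffAt_const.mul (nsq_contDiff.contDiffAt.log this))).sub contDiffAt_const

lemma tauf_deriv (T : ℝ) {t : ℝ} (ht : 0 < t) :
    HasDerivAt (fun t => 1 / 2 * Real.log t - T) (1 / 2 * t⁻¹) t :=
  ((Real.hasDerivAt_log ht.ne').const_mul _).sub_const _

lemma pd_tau {N : ℕ} (T : ℝ) {x : Euc N} (hx : x ≠ 0) (i : Fin N) :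
    pd i (tau T) x = x i / ‖x‖ ^ 2 := by
  have hp : 0 < ‖x‖ ^ 2 := by positivity
  have := pd_comp (i := i) (nsq_contDiff.contDiffAt.differentiableAt (by norm_num))
    (tauf_deriv T hp)
  rw [pd_nsq] at this
  rw [show tau T = fun y : Euc N => 1 / 2 * Real.log (‖y‖ ^ 2) - T from rfl, this]
  field_simp

lemma sum_sq {N : ℕ} (x : Euc N) : ∑ i, x i ^ 2 = ‖x‖ ^ 2 := by
  rw [EuclideanSpace.norm_sq_eq]; simp

lemma sum_pd_tau {N : ℕ} (T : ℝ) {x : Euc N} (hx : x ≠ 0) :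
    ∑ i, pd i (tau T) x ^ 2 = (‖x‖ ^ 2)⁻¹ := by
  have hp : 0 < ‖x‖ ^ 2 := by positivity
  simp only [pd_tau T hx, div_pow]
  rw [← Finset.sum_div, sum_sq]
  field_simp

lemma lap_tau {N : ℕ} (T : ℝ) {x : Euc N} (hx : x ≠ 0) :
    lap N (tau T) x = ((N : ℝ) - 2) / ‖x‖ ^ 2 := by
  have hp : 0 < ‖x‖ ^ 2 := by positivity
  have h2 : HasDerivAt (fun t : ℝ => 1 / 2 * t⁻¹) (1 / 2 * (-((‖x‖ ^ 2) ^ 2)⁻¹)) (‖x‖ ^ 2) :=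
    (hasDerivAt_inv hp.ne').const_mul _
  have := lap_comp (h := fun t => 1 / 2 * Real.log t - T) (h1 := fun t => 1 / 2 * t⁻¹)
    (f := fun x : Euc N => ‖x‖ ^ 2) (x := x) nsq_contDiff.contDiffAt
    ((contDiffAt_const.mul (contDiffAt_id.log hp.ne')).sub contDiffAt_const)
    (by filter_upwards [lt_mem_nhds hp] with t ht using tauf_deriv T ht) h2
  rw [show tau T = fun y : Euc N => 1 / 2 * Real.log (‖y‖ ^ 2) - T from rfl, this, lap_nsq]
  simp only [pd_nsq, mul_pow]
  rw [← Finset.mul_sum, sum_sq]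
  field_simp
  ring

/-- the radial profile. -/
def prof (a M t : ℝ) : ℝ := Real.exp (-a * t) * P3 (1 - t ^ 2 / M)
def prof1 (a M t : ℝ) : ℝ := Real.exp (-a * t) *
  (3 * max 0 (1 - t ^ 2 / M) ^ 2 * (-(2 * t / M)) - a * P3 (1 - t ^ 2 / M))
def prof2 (a M t : ℝ) : ℝ := Real.exp (-a * t) *
  ((6 * max 0 (1 - t ^ 2 / M) * (2 * t / M) ^ 2 - 3 * max 0 (1 - t ^ 2 / M) ^ 2 * (2 / M))
  - 2 * a * (3 * max 0 (1 - t ^ 2 / M) ^ 2 * (-(2 * t / M))) + a ^ 2 * P3 (1 - t ^ 2 / M))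

lemma inner_deriv (M t : ℝ) : HasDerivAt (fun t : ℝ => 1 - t ^ 2 / M) (-(2 * t / M)) t := by
  have := ((hasDerivAt_pow 2 t).div_const M).const_sub 1
  exact this.congr_deriv (by push_cast; ring)

lemma exp_deriv' (a t : ℝ) :
    HasDerivAt (fun t : ℝ => Real.exp (-a * t)) (Real.exp (-a * t) * -a) t :=
  ((hasDerivAt_id t).const_mul (-a)).exp.congr_deriv (by simp)

lemma prof_deriv (a M t : ℝ) : HasDerivAt (prof a M) (prof1 a M t) t := by
  have h := (exp_deriv' a t).mul ((P3_hasDerivAt _).comp t (inner_deriv M t))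
  exact h.congr_deriv (by simp only [prof1, Function.comp]; ring)

lemma prof1_deriv (a M t : ℝ) : HasDerivAt (prof1 a M) (prof2 a M t) t := by
  have hl : HasDerivAt (fun t : ℝ => -(2 * t / M)) (-(2 / M)) t :=
    (((hasDerivAt_id t).const_mul 2).div_const M).neg.congr_deriv (by ring)
  have hP := (P3_hasDerivAt _).comp t (inner_deriv M t)
  have hQ := (P2_hasDerivAt _).comp t (inner_deriv M t)
  have h := (exp_deriv' a t).mul ((hQ.mul hl).sub (hP.const_mul a))
  exact h.congr_deriv (by
    simp only [prof2, Function.comp, Pi.mul_apply, Pi.sub_apply]; ring)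

lemma prof_contDiff (a M : ℝ) : ContDiff ℝ 2 (prof a M) := by
  unfold prof
  refine ContDiff.mul (by fun_prop) (P3_contDiff.comp (by fun_prop))

lemma P3_nonneg (y : ℝ) : 0 ≤ P3 y := pow_nonneg (le_max_left _ _) _

lemma prof_nonneg (a M t : ℝ) : 0 ≤ prof a M t := mul_nonneg (Real.exp_pos _).le (P3_nonneg _)

lemma prof_ineq {a δ M t : ℝ} (hδ : 0 < δ) (hM : M = 10 / δ) :
    -(δ + a ^ 2) * prof a M t ≤ prof2 a M t + 2 * a * prof1 a M t := by
  have hMp : 0 < M := by rw [hM]; positivity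
  have : 0 ≤ Real.exp (-a * t) *
      ((6 * max 0 (1 - t ^ 2 / M) * (2 * t / M) ^ 2 - 3 * max 0 (1 - t ^ 2 / M) ^ 2 * (2 / M))
        + δ * P3 (1 - t ^ 2 / M)) := by
    refine mul_nonneg (Real.exp_pos _).le ?_
    unfold P3
    rcases le_total (1 - t ^ 2 / M) 0 with h | h
    · simp [max_eq_left h]
    · rw [max_eq_right h]
      set y := 1 - t ^ 2 / M with hy
      have e1 : (2 * t / M) ^ 2 = 4 * (1 - y) / M := by rw [hy]; field_simp; ring
      have e2 : δ = 10 / M := by rw [hM]; field_simp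
      rw [e1, e2]
      have : 6 * y * (4 * (1 - y) / M) - 3 * y ^ 2 * (2 / M) + 10 / M * y ^ 3
        = y / M * (24 - 30 * y + 10 * y ^ 2) := by ring
      rw [this]
      have : 0 ≤ 24 - 30 * y + 10 * y ^ 2 := by nlinarith [sq_nonneg (2 * y - 3)]
      positivity
  simp only [prof, prof1, prof2]
  nlinarith

/-- the angular profile. -/
def gee (ε t : ℝ) : ℝ := P3 (t - ε) / t ^ 2
def gee1 (ε t : ℝ) : ℝ := 3 * max 0 (t - ε) ^ 2 / t ^ 2 - 2 * P3 (t - ε) / t ^ 3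
def gee2 (ε t : ℝ) : ℝ := 6 * max 0 (t - ε) * (t - max 0 (t - ε)) ^ 2 / t ^ 4

lemma gee_deriv (ε : ℝ) {t : ℝ} (ht : 0 < t) : HasDerivAt (gee ε) (gee1 ε t) t := by
  have hP := (P3_hasDerivAt _).comp t ((hasDerivAt_id t).sub_const ε)
  have h := hP.div (hasDerivAt_pow 2 t) (by positivity)
  refine h.congr_deriv ?_
  simp only [gee1, Function.comp, id]
  push_cast
  field_simp

lemma gee1_deriv (ε : ℝ) {t : ℝ} (ht : 0 < t) : HasDerivAt (gee1 ε) (gee2 ε t) t := by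
  have hP := (P3_hasDerivAt _).comp t ((hasDerivAt_id t).sub_const ε)
  have hQ := (P2_hasDerivAt _).comp t ((hasDerivAt_id t).sub_const ε)
  have h := (hQ.div (hasDerivAt_pow 2 t) (by positivity)).sub
    ((hP.const_mul 2).div (hasDerivAt_pow 3 t) (by positivity))
  refine h.congr_deriv ?_
  simp only [gee2, Function.comp, id, P3]
  push_cast
  field_simp
  ring

lemma gee_contDiffAt (ε : ℝ) {t : ℝ} (ht : 0 < t) : ContDiffAt ℝ 2 (gee ε) t := by
  unfold gee
  exact ((P3_contDiff.comp (by fun_prop : ContDiff ℝ 2 fun t : ℝ => t - ε)).contDiffAt).div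
    (by fun_prop) (by positivity)

lemma gee_nonneg (ε t : ℝ) : 0 ≤ gee ε t := div_nonneg (P3_nonneg _) (sq_nonneg _)

lemma gee_le {ε t : ℝ} (hε : 0 < ε) (ht : 0 < t) : gee ε t ≤ t := by
  unfold gee P3
  rw [div_le_iff₀ (by positivity)]
  have h1 : max 0 (t - ε) ≤ t := max_le ht.le (by linarith)
  calc max 0 (t - ε) ^ 3 ≤ t ^ 3 := pow_le_pow_left₀ (le_max_left _ _) h1 3
    _ = t * t ^ 2 := by ring

lemma gee_anti {ε ε' t : ℝ} (h : ε ≤ ε') : gee ε' t ≤ gee ε t := by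
  unfold gee P3
  gcongr

lemma gee2_nonneg {ε t : ℝ} : 0 ≤ gee2 ε t := by
  unfold gee2
  have := le_max_left 0 (t - ε)
  positivity

lemma gee1_bound {ε t l : ℝ} (hε : 0 < ε) (ht : 0 < t) :
    l * (gee1 ε t * t) ≤ l * gee ε t + 3 * ε * |l| := by
  have e : gee1 ε t * t - gee ε t = 3 * max 0 (t - ε) ^ 2 * (t - max 0 (t - ε)) / t ^ 2 := by
    unfold gee1 gee P3; field_simp; ring
  have h1 : max 0 (t - ε) ≤ t := max_le ht.le (by linarith)
  have h0 := le_max_left 0 (t - ε)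
  have b0 : 0 ≤ gee1 ε t * t - gee ε t := by
    rw [e]
    have : 0 ≤ t - max 0 (t - ε) := by linarith
    positivity
  have b1 : gee1 ε t * t - gee ε t ≤ 3 * ε := by
    rw [e, div_le_iff₀ (by positivity)]
    have h3 : t - max 0 (t - ε) ≤ ε := by linarith [le_max_right 0 (t - ε)]
    have h4 : max 0 (t - ε) ^ 2 ≤ t ^ 2 := pow_le_pow_left₀ h0 h1 2
    have h5 : max 0 (t - ε) ^ 2 * (t - max 0 (t - ε)) ≤ t ^ 2 * ε :=
      mul_le_mul h4 h3 (by linarith) (by positivity)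
    linarith
  have : l * (gee1 ε t * t - gee ε t) ≤ |l| * (3 * ε) :=
    mul_le_mul (le_abs_self l) b1 b0 (abs_nonneg l)
  linarith

lemma coneGT_isOpen {N : ℕ} {Ω : Set (Euc N)} (hΩ : IsConeDomain N Ω) {ρ : ℝ} (hρ : 0 < ρ) :
    IsOpen (coneGT N ρ Ω) := by
  obtain ⟨O, hO, hOe⟩ := isOpen_induced_iff.1 hΩ.2.2
  have hO1 : IsOpen {x : Euc N | ρ < ‖x‖} := isOpen_lt continuous_const continuous_norm
  have hc : ContinuousOn (fun x : Euc N => ‖x‖⁻¹ • x) {x : Euc N | ρ < ‖x‖} := by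
    refine ContinuousOn.smul (ContinuousOn.inv₀ continuous_norm.continuousOn ?_) continuousOn_id
    intro x hx
    exact (hρ.trans hx).ne'
  have := hc.isOpen_inter_preimage hO1 hO
  convert this using 1
  ext x
  simp only [coneGT, mem_ofPred_eq, mem_inter_iff, mem_preimage]
  refine and_congr_right fun hx => ?_
  have hn : 0 < ‖x‖ := hρ.trans hx
  have hs : ‖x‖⁻¹ • x ∈ Metric.sphere (0 : Euc N) 1 := by
    simp [norm_smul, hn.ne']
  have := Set.ext_iff.1 hOe ⟨_, hs⟩
  simpa using this.symm

lemma rpow_neg_two_eq (r : ℝ) (hr : 0 ≤ r) : r ^ (-(2:ℝ)) = (r ^ 2)⁻¹ := by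
  rw [Real.rpow_neg hr, Real.rpow_two]

lemma euler_zero {N : ℕ} {φ : Euc N → ℝ} {x : Euc N} (hx : x ≠ 0)
    (hd : DifferentiableAt ℝ (fun y : Euc N => φ (‖y‖⁻¹ • y)) x) :
    ∑ i, x i * pd i (fun y : Euc N => φ (‖y‖⁻¹ • y)) x = 0 := by
  set Φ := fun y : Euc N => φ (‖y‖⁻¹ • y) with hΦ
  have h1 : ∑ i, x i * pd i Φ x = fderiv ℝ Φ x x := by
    have hx' : x = ∑ i, x i • (EuclideanSpace.single i (1:ℝ) : Euc N) := by
      have := (EuclideanSpace.basisFun (Fin N) ℝ).sum_repr x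
      simpa using this.symm
    have h2 := congrArg (fun z => fderiv ℝ Φ x z) hx'
    simp only [map_sum, map_smul, smul_eq_mul] at h2
    exact h2.symm
  rw [h1]
  have h2 : HasDerivAt (fun t : ℝ => Φ (x + t • x)) (fderiv ℝ Φ x x) 0 :=
    hd.hasFDerivAt.hasLineDerivAt x
  have h3 : (fun t : ℝ => Φ (x + t • x)) =ᶠ[nhds 0] fun _ => Φ x := by
    filter_upwards [lt_mem_nhds (show (-1:ℝ) < 0 by norm_num)] with t ht
    have hp : 0 < 1 + t := by linarith
    have e : x + t • x = (1 + t) • x := by rw [add_smul, one_smul]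
    simp only [hΦ]
    rw [e, norm_smul, smul_smul, Real.norm_of_nonneg hp.le]
    congr 2
    have : 0 < ‖x‖ := norm_pos_iff.2 hx
    field_simp
  exact h2.unique ((hasDerivAt_const _ _).congr_of_eventuallyEq h3)

/-- the weight `F²/r²`. -/
def wt {N : ℕ} (a M T : ℝ) (x : Euc N) : ℝ := prof a M (tau T x) ^ 2 * (‖x‖ ^ 2)⁻¹

lemma wt_nonneg {N : ℕ} (a M T : ℝ) (x : Euc N) : 0 ≤ wt a M T x := by
  unfold wt; positivity

/-- The closed annulus `|log‖x‖ - T| ≤ L`. -/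
def ann (N : ℕ) (T L : ℝ) : Set (Euc N) := {x | Real.exp (T - L) ≤ ‖x‖ ∧ ‖x‖ ≤ Real.exp (T + L)}

lemma ann_compact (N : ℕ) (T L : ℝ) : IsCompact (ann N T L) := by
  refine Metric.isCompact_of_isClosed_isBounded ?_ ?_
  · exact (isClosed_le continuous_const continuous_norm).inter
      (isClosed_le continuous_norm continuous_const)
  · refine (Metric.isBounded_closedBall (x := (0 : Euc N)) (r := Real.exp (T + L))).subset ?_
    intro x hx
    simpa using hx.2

lemma prof_zero {N : ℕ} {a M T L : ℝ} (hL : 0 < L) (hM : M = L ^ 2) {x : Euc N} (hx : x ≠ 0)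
    (h : x ∉ ann N T L) : prof a M (tau T x) = 0 := by
  have hp : 0 < ‖x‖ := norm_pos_iff.2 hx
  have ht : tau T x = Real.log ‖x‖ - T := by
    unfold tau; rw [Real.log_pow]; push_cast; ring
  have hL2 : L ≤ |tau T x| := by
    by_contra hc
    push Not at hc
    rw [ht, abs_lt] at hc
    apply h
    constructor
    · rw [← Real.le_log_iff_exp_le hp]; linarith [hc.1]
    · rw [← Real.log_le_iff_le_exp hp]; linarith [hc.2]
  have : 1 - tau T x ^ 2 / M ≤ 0 := by
    rw [sub_nonpos, hM, one_le_div (by positivity), ← sq_abs (tau T x)]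
    exact pow_le_pow_left₀ hL.le hL2 2
  unfold prof P3
  rw [max_eq_left this]
  simp

lemma wt_continuousAt {N : ℕ} (a M T : ℝ) {x : Euc N} (hx : x ≠ 0) :
    ContinuousAt (wt (N := N) a M T) x := by
  have hp : ‖x‖ ^ 2 ≠ 0 := by positivity
  unfold wt
  refine ContinuousAt.mul (ContinuousAt.pow ?_ 2) (ContinuousAt.inv₀ (by fun_prop) hp)
  exact (prof_contDiff a M).continuous.continuousAt.comp (tau_contDiffAt T hx).continuousAt

lemma ne_zero_of_coneGT {N : ℕ} {Ω : Set (Euc N)} {ρ : ℝ} (hρ : 0 < ρ) {x : Euc N}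
    (hx : x ∈ coneGT N ρ Ω) : x ≠ 0 := norm_pos_iff.1 (hρ.trans hx.1)

lemma wt_integrable {N : ℕ} {a M T L ρ : ℝ} {Ω : Set (Euc N)} (hΩ : IsConeDomain N Ω)
    (hρ : 0 < ρ) (hL : 0 < L) (hM : M = L ^ 2) :
    IntegrableOn (wt (N := N) a M T) (coneGT N ρ Ω) := by
  have h1 : IntegrableOn (wt (N := N) a M T) (ann N T L) := by
    refine ContinuousOn.integrableOn_compact (ann_compact N T L) ?_
    intro x hx
    have : x ≠ 0 := norm_pos_iff.1 (lt_of_lt_of_le (Real.exp_pos _) hx.1)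
    exact (wt_continuousAt a M T this).continuousWithinAt
  have hm := (coneGT_isOpen hΩ hρ).measurableSet
  refine IntegrableOn.of_forall_sdiff_eq_zero (h1.mono_set (s := coneGT N ρ Ω ∩ ann N T L)
    inter_subset_right) hm ?_
  intro x hx
  have hz := prof_zero (a := a) hL hM (ne_zero_of_coneGT hρ hx.1) (fun h => hx.2 ⟨hx.1, h⟩)
  simp [wt, hz]

lemma small_contra {e0 d l C : ℝ} (he0 : 0 < e0) (hd : 0 < d) (hl : 0 ≤ l) (hC : 0 ≤ C)
    (h : ∀ e, 0 < e → e ≤ e0 → d ≤ 3 * e * l * C) : False := by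
  have hD : 0 < 3 * l * C + 1 := by positivity
  have hp : 0 < min e0 (d / (2 * (3 * l * C + 1))) := lt_min he0 (by positivity)
  have h1 := h _ hp (min_le_left _ _)
  have h2 : min e0 (d / (2 * (3 * l * C + 1))) * (3 * l * C + 1) ≤ d / 2 := by
    calc _ ≤ d / (2 * (3 * l * C + 1)) * (3 * l * C + 1) :=
          mul_le_mul_of_nonneg_right (min_le_right _ _) hD.le
      _ = d / 2 := by field_simp
  nlinarith

set_option maxHeartbeats 2000000 in
theorem no_super (N : ℕ) (hN : 2 ≤ N) (Ω : Set (Euc N)) (hΩ : IsConeDomain N Ω)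
    (lam1 : ℝ) (φ : Euc N → ℝ) (hphi : DirichletEigenpair N Ω lam1 φ)
    (ρ μ : ℝ) (hρ : 0 < ρ) (hμ : CHconst N lam1 < μ) (v : Euc N → ℝ)
    (hv : ContDiffOn ℝ 2 v (coneGT N ρ Ω)) (hpos : ∀ x ∈ coneGT N ρ Ω, 0 < v x)
    (hsup : ∀ x ∈ coneGT N ρ Ω, 0 ≤ -lap N v x - μ * ‖x‖ ^ (-(2:ℝ)) * v x) : False := by
  set U := coneGT N ρ Ω with hUdef
  have hU : IsOpen U := coneGT_isOpen hΩ hρ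
  set Φ := fun y : Euc N => φ (‖y‖⁻¹ • y) with hΦ
  have hne : ∀ x ∈ U, x ≠ 0 := fun x hx => ne_zero_of_coneGT hρ hx
  have hUc : U ⊆ cone N Ω := fun x hx => ⟨hne x hx, hx.2⟩
  have hΦd : ∀ x ∈ U, ContDiffAt ℝ 2 Φ x := fun x hx =>
    (hphi.smoothExt.mono hUc).contDiffAt (hU.mem_nhds hx)
  have hΦp : ∀ x ∈ U, 0 < Φ x := fun x hx => hphi.pos _ hx.2
  have hΦ1 : ∀ x ∈ U, Φ x ≤ 1 := fun x hx => hphi.le_one _ (subset_closure hx.2)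
  set a : ℝ := ((N : ℝ) - 2) / 2 with ha
  set δ : ℝ := (μ - CHconst N lam1) / 2 with hδdef
  have hδ : 0 < δ := by rw [hδdef]; linarith
  set M : ℝ := 10 / δ with hM
  have hMp : 0 < M := by positivity
  set L : ℝ := Real.sqrt M with hLdef
  have hL : 0 < L := Real.sqrt_pos.2 hMp
  have hML : M = L ^ 2 := (Real.sq_sqrt hMp.le).symm
  set T : ℝ := Real.log ρ + L + 1 with hT
  have hannρ : ∀ x ∈ ann N T L, ρ < ‖x‖ := by
    intro x hx
    refine lt_of_lt_of_le ?_ hx.1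
    rw [← Real.log_lt_iff_lt_exp hρ]
    rw [hT]; linarith
  have hgc : ∀ ε, ContinuousOn (fun x => gee ε (Φ x)) U := fun ε x hx =>
    (ContinuousAt.comp (g := gee ε) (gee_contDiffAt ε (hΦp x hx)).continuousAt
      (hΦd x hx).continuousAt).continuousWithinAt
  have hwi : IntegrableOn (wt (N := N) a M T) U := wt_integrable hΩ hρ hL hML
  have hg1 : ∀ ε, 0 < ε → ∀ x ∈ U, gee ε (Φ x) ≤ 1 := fun ε hε x hx =>
    (gee_le hε (hΦp x hx)).trans (hΦ1 x hx)
  have hwc : ContinuousOn (wt (N := N) a M T) U := fun x hx =>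
    (wt_continuousAt a M T (hne x hx)).continuousWithinAt
  have hi1 : ∀ ε, 0 < ε → IntegrableOn (fun x => wt a M T x * gee ε (Φ x)) U := by
    intro ε hε
    refine Integrable.mono' hwi ((hwc.mul (hgc ε)).aestronglyMeasurable hU.measurableSet) ?_
    refine (ae_restrict_iff' hU.measurableSet).2 (.of_forall fun x hx => ?_)
    rw [Real.norm_of_nonneg (mul_nonneg (wt_nonneg _ _ _ _) (gee_nonneg _ _))]
    exact mul_le_of_le_one_right (wt_nonneg _ _ _ _) (hg1 ε hε x hx)
  have hi2 : ∀ ε, 0 < ε → IntegrableOn (fun x => wt a M T x * gee ε (Φ x) ^ 2) U := by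
    intro ε hε
    refine Integrable.mono' hwi ((hwc.mul ((hgc ε).pow 2)).aestronglyMeasurable
      hU.measurableSet) ?_
    refine (ae_restrict_iff' hU.measurableSet).2 (.of_forall fun x hx => ?_)
    rw [Real.norm_of_nonneg (mul_nonneg (wt_nonneg _ _ _ _) (sq_nonneg _))]
    exact mul_le_of_le_one_right (wt_nonneg _ _ _ _)
      (pow_le_one₀ (gee_nonneg _ _) (hg1 ε hε x hx))
  -- main inequality
  have main : ∀ ε, 0 < ε → δ * ∫ x in U, wt a M T x * gee ε (Φ x) ^ 2 ≤
      3 * ε * |lam1| * ∫ x in U, wt a M T x * gee ε (Φ x) := by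
    intro ε hε
    set w : Euc N → ℝ := fun x => prof a M (tau T x) * gee ε (Φ x) with hw
    have hF : ∀ x ∈ U, ContDiffAt ℝ 2 (fun y : Euc N => prof a M (tau T y)) x := fun x hx =>
      ContDiffAt.comp (g := prof a M) x (prof_contDiff a M).contDiffAt
        (tau_contDiffAt T (hne x hx))
    have hG : ∀ x ∈ U, ContDiffAt ℝ 2 (fun y : Euc N => gee ε (Φ y)) x := fun x hx =>
      ContDiffAt.comp (g := gee ε) x (gee_contDiffAt ε (hΦp x hx)) (hΦd x hx)
    set S : Set (Euc N) := closure Ω ∩ φ ⁻¹' (Ici ε) with hS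
    have hSc : IsClosed S := hphi.contOn.preimage_isClosed_of_isClosed isClosed_closure isClosed_Ici
    have hSΩ : S ⊆ Ω := by
      intro ω hω
      by_contra hc
      have h1 := hphi.bdryZero ω ⟨hω.1, hc⟩
      have h2 : ε ≤ φ ω := hω.2
      linarith
    set K : Set (Euc N) := ann N T L ∩ (fun x : Euc N => ‖x‖⁻¹ • x) ⁻¹' S with hK
    have hKc : IsCompact K := by
      refine (ann_compact N T L).of_isClosed_subset ?_ inter_subset_left
      refine ContinuousOn.preimage_isClosed_of_isClosed ?_ (ann_compact N T L).isClosed hSc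
      refine ContinuousOn.smul (ContinuousOn.inv₀ continuous_norm.continuousOn ?_) continuousOn_id
      intro x hx
      exact (hρ.trans (hannρ x hx)).ne'
    have hKU : K ⊆ U := fun x hx => ⟨hannρ x hx.1, hSΩ hx.2⟩
    have hw0 : ∀ x ∈ U, x ∉ K → w x = 0 := by
      intro x hx hxK
      by_cases hxa : x ∈ ann N T L
      · have : Φ x < ε := by
          by_contra hc
          push Not at hc
          exact hxK ⟨hxa, subset_closure hx.2, hc⟩
        have hz : gee ε (Φ x) = 0 := by
          unfold gee P3
          rw [max_eq_left (by linarith)]; simp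
        simp [hw, hz]
      · have hz := prof_zero (a := a) hL hML (hne x hx) hxa
        simp [hw, hz]
    have hHi : IntegrableOn (fun x => 3 * ε * |lam1| * (wt a M T x * gee ε (Φ x)) -
        δ * (wt a M T x * gee ε (Φ x) ^ 2)) U :=
      Integrable.sub (Integrable.const_mul (hi1 ε hε) (3 * ε * |lam1|))
        (Integrable.const_mul (hi2 ε hε) δ)
    have hB := barta (H := fun x => 3 * ε * |lam1| * (wt a M T x * gee ε (Φ x)) -
        δ * (wt a M T x * gee ε (Φ x) ^ 2)) hU hKc hKU (w := w)
      (fun x hx => ((hF x hx).mul (hG x hx)).contDiffWithinAt) hv hpos hw0 hHi ?_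
    · rw [integral_sub ((hi1 ε hε).const_mul _) ((hi2 ε hε).const_mul _),
        integral_const_mul, integral_const_mul] at hB
      linarith
    · intro x hx
      have hx0 := hne x hx
      have hR : 0 < (‖x‖ ^ 2)⁻¹ := by
        have : 0 < ‖x‖ := norm_pos_iff.2 hx0
        positivity
      have hlapF := lap_comp (h := prof a M) (h1 := prof1 a M) (tau_contDiffAt T hx0)
        (prof_contDiff a M).contDiffAt (.of_forall fun t => prof_deriv a M t)
        (prof1_deriv a M _)
      have hlapG := lap_comp (h := gee ε) (h1 := gee1 ε) (hΦd x hx)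
        (gee_contDiffAt ε (hΦp x hx))
        (by filter_upwards [lt_mem_nhds (hΦp x hx)] with t ht using gee_deriv ε ht)
        (gee1_deriv ε (hΦp x hx))
      have hcross : ∑ i, pd i (fun y : Euc N => prof a M (tau T y)) x *
          pd i (fun y : Euc N => gee ε (Φ y)) x = 0 := by
        have he := euler_zero hx0 ((hΦd x hx).differentiableAt (by norm_num))
        have : ∀ i, pd i (fun y : Euc N => prof a M (tau T y)) x *
          pd i (fun y : Euc N => gee ε (Φ y)) x =
            (prof1 a M (tau T x) * gee1 ε (Φ x) / ‖x‖ ^ 2) * (x i * pd i Φ x) := by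
          intro i
          rw [pd_comp ((tau_contDiffAt T hx0).differentiableAt (by norm_num))
            (prof_deriv a M _), pd_comp ((hΦd x hx).differentiableAt (by norm_num))
            (gee_deriv ε (hΦp x hx)), pd_tau T hx0]
          ring
        simp only [this]
        rw [← Finset.mul_sum, he, mul_zero]
      have hlapw := lap_mul (hF x hx) (hG x hx)
      rw [hcross, hlapF, hlapG, sum_pd_tau T hx0, lap_tau T hx0,
        show lap N Φ x = _ from hphi.eigen x (hUc hx), rpow_neg_two_eq _ (norm_nonneg _)] at hlapw
      have hs := hsup x hx
      rw [rpow_neg_two_eq _ (norm_nonneg _)] at hs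
      have hpi := prof_ineq (a := a) (t := tau T x) hδ hM
      have hgb := gee1_bound (l := lam1) hε (hΦp x hx)
      have hg2 : 0 ≤ gee2 ε (Φ x) * ∑ i, pd i Φ x ^ 2 :=
        mul_nonneg gee2_nonneg (Finset.sum_nonneg fun i _ => sq_nonneg _)
      have hE := prof_nonneg a M (tau T x)
      have hg := gee_nonneg ε (Φ x)
      have hv0 := hpos x hx
      have hwv : w x ^ 2 / v x * lap N v x ≤ -μ * (‖x‖ ^ 2)⁻¹ * w x ^ 2 := by
        have h1 : lap N v x ≤ -(μ * (‖x‖ ^ 2)⁻¹ * v x) := by linarith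
        have h2 := mul_le_mul_of_nonneg_left h1 (by positivity : 0 ≤ w x ^ 2 / v x)
        refine h2.trans (le_of_eq ?_)
        field_simp
      have e0 : ((N : ℝ) - 2) / ‖x‖ ^ 2 = 2 * a * (‖x‖ ^ 2)⁻¹ := by rw [ha]; ring
      rw [e0] at hlapw
      have hδe : μ = 2 * δ + lam1 + a ^ 2 := by rw [hδdef, CHconst]; ring
      have hΦx : φ (‖x‖⁻¹ • x) = Φ x := rfl
      rw [hΦx] at hlapw
      simp only [wt]
      rw [hlapw]
      have hwx : w x = prof a M (tau T x) * gee ε (Φ x) := rfl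
      rw [hwx] at hwv ⊢
      generalize prof a M (tau T x) = F at *
      generalize prof1 a M (tau T x) = F1 at *
      generalize prof2 a M (tau T x) = F2 at *
      generalize gee ε (Φ x) = G at *
      generalize gee1 ε (Φ x) = G1 at *
      generalize gee2 ε (Φ x) * ∑ i, pd i Φ x ^ 2 = Q at *
      generalize (‖x‖ ^ 2)⁻¹ = R at *
      generalize Φ x = f at *
      have k1 := mul_le_mul_of_nonneg_left hpi (by positivity : 0 ≤ F * G ^ 2 * R)
      have k2 := mul_le_mul_of_nonneg_left hgb (by positivity : 0 ≤ F ^ 2 * G * R)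
      have k3 : 0 ≤ F ^ 2 * G * Q := by positivity
      rw [hδe] at hwv
      linarith
  -- conclusion
  obtain ⟨ω, hω⟩ := hΩ.2.1.nonempty
  have hωn : ‖ω‖ = 1 := by simpa using hΩ.1 hω
  set x0 : Euc N := Real.exp T • ω with hx0
  have hx0n : ‖x0‖ = Real.exp T := by
    rw [hx0, norm_smul, hωn, mul_one, Real.norm_of_nonneg (Real.exp_pos _).le]
  have hx0d : ‖x0‖⁻¹ • x0 = ω := by
    rw [hx0n, hx0, smul_smul, inv_mul_cancel₀ (Real.exp_pos _).ne', one_smul]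
  have hx0U : x0 ∈ U := by
    refine ⟨?_, by rw [hx0d]; exact hω⟩
    rw [hx0n, ← Real.log_lt_iff_lt_exp hρ, hT]; linarith
  set ε0 : ℝ := φ ω / 2 with hε0
  have hφω := hphi.pos ω hω
  have hε0p : 0 < ε0 := by positivity
  have hΦx0 : Φ x0 = φ ω := by simp only [hΦ]; rw [hx0d]
  set q0 : Euc N → ℝ := fun x => wt a M T x * gee ε0 (Φ x) ^ 2 with hq0
  have hq0nn : ∀ x, 0 ≤ q0 x := fun x => mul_nonneg (wt_nonneg _ _ _ _) (sq_nonneg _)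
  have hq0x : 0 < q0 x0 := by
    have ht : tau T x0 = 0 := by
      unfold tau; rw [Real.log_pow, hx0n, Real.log_exp]; push_cast; ring
    have h1 : 0 < gee ε0 (Φ x0) := by
      rw [hΦx0]; unfold gee P3
      rw [max_eq_right (by linarith)]
      have : 0 < φ ω - ε0 := by linarith
      positivity
    have h2 : 0 < wt a M T x0 := by
      unfold wt
      rw [ht, hx0n]
      have : prof a M 0 = 1 := by simp [prof, P3]
      rw [this]
      have := Real.exp_pos T
      positivity
    simp only [hq0]
    positivity
  have hq0c : ContinuousOn q0 U := hwc.mul ((hgc ε0).pow 2)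
  set c : ℝ := ∫ x in U, q0 x with hc
  have hcp : 0 < c := by
    rw [hc, setIntegral_pos_iff_support_of_nonneg_ae (.of_forall hq0nn) (hi2 ε0 hε0p)]
    have hopen : IsOpen (U ∩ q0 ⁻¹' (Ioi 0)) := hq0c.isOpen_inter_preimage hU isOpen_Ioi
    refine lt_of_lt_of_le (hopen.measure_pos volume ⟨x0, hx0U, hq0x⟩) (measure_mono ?_)
    rintro x ⟨h1, h2⟩
    exact ⟨(mem_Ioi.1 h2).ne', h1⟩
  set C : ℝ := ∫ x in U, wt a M T x with hC
  have hCnn : 0 ≤ C := integral_nonneg fun x => wt_nonneg _ _ _ _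
  have fin : ∀ ε, 0 < ε → ε ≤ ε0 → δ * c ≤ 3 * ε * |lam1| * C := by
    intro ε hε hle
    have h1 : c ≤ ∫ x in U, wt a M T x * gee ε (Φ x) ^ 2 := by
      refine setIntegral_mono_on (hi2 ε0 hε0p) (hi2 ε hε) hU.measurableSet fun x hx => ?_
      exact mul_le_mul_of_nonneg_left (pow_le_pow_left₀ (gee_nonneg _ _) (gee_anti hle) 2)
        (wt_nonneg _ _ _ _)
    have h2 : ∫ x in U, wt a M T x * gee ε (Φ x) ≤ C := by
      refine setIntegral_mono_on (hi1 ε hε) hwi hU.measurableSet fun x hx => ?_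
      exact mul_le_of_le_one_right (wt_nonneg _ _ _ _) (hg1 ε hε x hx)
    calc δ * c ≤ δ * ∫ x in U, wt a M T x * gee ε (Φ x) ^ 2 :=
          mul_le_mul_of_nonneg_left h1 hδ.le
      _ ≤ _ := main ε hε
      _ ≤ _ := mul_le_mul_of_nonneg_left h2 (by positivity)
  exact small_contra hε0p (mul_pos hδ hcp) (abs_nonneg lam1) hCnn fin

/-- if `μ > C_{H,Ω}` then the system `(S)` has no positive solution in `C_Ω^ρ`. -/
theorem system_no_solution_of_mu_gt_hardy
    (N : ℕ) (hN : 2 ≤ N) (Ω : Set (Euc N)) (hΩ : IsConeDomain N Ω)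
    (lam1 : ℝ) (φ : Euc N → ℝ) (hphi : DirichletEigenpair N Ω lam1 φ)
    (α p q s ρ μ : ℝ) (hα : 0 ≤ α) (hαN : α < N) (hp : 0 < p) (hq : 0 < q) (hs : 1 < s)
    (hρ : 0 < ρ) (hμ : CHconst N lam1 < μ) :
    ¬ ∃ u v : Euc N → ℝ, IsPosSolS N ρ μ α p q s Ω u v := by
  rintro ⟨u, v, -, -, hv, -, hu0, hv0, -, -, h⟩
  refine no_super N hN Ω hΩ lam1 φ hphi ρ μ hρ hμ v hv hv0 fun x hx => ?_
  exact (Real.rpow_nonneg (hu0 x hx).le s).trans (h x hx)
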